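/- Let k be an algebraically closed field of characteristic 3, let g = sl_3(k) be the Lie algebra of traceless 3×3 matrices over k, let Z(g) be its center, and let L = g/Z(g) be the 7-dimensional quotient g-module with the action induced by the adjoint action. Then dim_k H^1(g, L) = 7. -/

import Mathlib

/-! Chevalley–Eilenberg cohomology of a Lie algebra with coefficients in a module. -/

section ChevalleyEilenberg

variable (k : Type*) [Field k]
variable (g : Type*) [LieRing g] [LieAlgebra k g]
variable (M : Type*) [AddCommGroup M] [Module k M] [LieRingModule g M] [LieModule k g M]

/-- The Chevalley–Eilenberg differential, as a raw function from alternating `n`-cochains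
to `(n+1)`-ary functions:
`dψ(l₀,…,lₙ) = Σ_{i<j} (−1)^{i+j} ψ(⁅lᵢ,lⱼ⁆, …, l̂ᵢ, …, l̂ⱼ, …) + Σ_i (−1)^i ⁅lᵢ, ψ(…, l̂ᵢ, …)⁆`
(indices written from 0; this is the paper's formula with 1-based indices shifted by one). -/
def ceD : ∀ {n : ℕ}, (g [⋀^Fin n]→ₗ[k] M) → ((Fin (n + 1) → g) → M)
  | 0, ψ, v => ⁅v 0, ψ ![]⁆
  | (n + 1), ψ, v =>
      (∑ i : Fin (n + 2), ∑ j : Fin (n + 2),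
        if h : i < j then
          ((-1 : ℤ) ^ (i.val + j.val)) •
            ψ (Fin.cons ⁅v i, v j⁆
              (fun l => v (i.succAbove
                ((j.pred (Fin.pos_iff_ne_zero.mp (lt_of_le_of_lt i.zero_le h))).succAbove l))))
        else 0)
      + ∑ i : Fin (n + 2), ((-1 : ℤ) ^ i.val) • ⁅v i, ψ (fun l => v (i.succAbove l))⁆

variable {k g M}

private lemma dite_add_zero {P : Prop} [Decidable P] {N : Type*} [AddZeroClass N]
    (A B : P → N) :
    (dite P (fun h => A h + B h) fun _ => 0) =
      (dite P A fun _ => 0) + (dite P B fun _ => 0) := by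
  split_ifs <;> simp

private lemma dite_smul_zero {P : Prop} [Decidable P] {N : Type*} [AddCommGroup N] [Module k N]
    (c : k) (A : P → N) :
    (dite P (fun h => c • A h) fun _ => 0) = c • dite P A fun _ => 0 := by
  split_ifs <;> simp

lemma ceD_add {n : ℕ} (ψ φ : g [⋀^Fin n]→ₗ[k] M) (v : Fin (n + 1) → g) :
    ceD k g M (ψ + φ) v = ceD k g M ψ v + ceD k g M φ v := by
  cases n with
  | zero => simp [ceD]
  | succ n =>
    simp only [ceD, AlternatingMap.add_apply, smul_add, lie_add, dite_add_zero,
      Finset.sum_add_distrib]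
    abel

lemma ceD_smul {n : ℕ} (c : k) (ψ : g [⋀^Fin n]→ₗ[k] M) (v : Fin (n + 1) → g) :
    ceD k g M (c • ψ) v = c • ceD k g M ψ v := by
  cases n with
  | zero => simp [ceD]
  | succ n =>
    simp only [ceD, AlternatingMap.smul_apply, lie_smul, smul_comm _ c, dite_smul_zero,
      ← Finset.smul_sum, smul_add]

lemma ceD_zero {n : ℕ} (v : Fin (n + 1) → g) :
    ceD k g M (0 : g [⋀^Fin n]→ₗ[k] M) v = 0 := by
  cases n with
  | zero => simp [ceD]
  | succ n => simp [ceD]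

variable (k g M)

/-- The space of Chevalley–Eilenberg `n`-cocycles `Zⁿ(g, M)`. -/
def ceZ (n : ℕ) : Submodule k (g [⋀^Fin n]→ₗ[k] M) where
  carrier := {ψ | ∀ v, ceD k g M ψ v = 0}
  add_mem' := by
    intro ψ φ hψ hφ v
    rw [ceD_add, hψ v, hφ v, add_zero]
  zero_mem' := fun v => ceD_zero v
  smul_mem' := by
    intro c ψ hψ v
    rw [ceD_smul, hψ v, smul_zero]

/-- The space of Chevalley–Eilenberg `n`-coboundaries `Bⁿ(g, M)`: in positive degree, the
alternating `n`-cochains that agree (as functions) with `dφ` for some `(n-1)`-cochain `φ`. -/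
def ceB : (n : ℕ) → Submodule k (g [⋀^Fin n]→ₗ[k] M)
  | 0 => ⊥
  | (n + 1) =>
      { carrier := {ψ | ∃ φ : g [⋀^Fin n]→ₗ[k] M, ∀ v, ψ v = ceD k g M φ v}
        add_mem' := by
          rintro ψ χ ⟨φ₁, h₁⟩ ⟨φ₂, h₂⟩
          exact ⟨φ₁ + φ₂, fun v => by
            rw [AlternatingMap.add_apply, h₁ v, h₂ v, ceD_add]⟩
        zero_mem' := ⟨0, fun v => by rw [AlternatingMap.zero_apply, ceD_zero]⟩
        smul_mem' := by
          rintro c ψ ⟨φ, h⟩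
          exact ⟨c • φ, fun v => by rw [AlternatingMap.smul_apply, h v, ceD_smul]⟩ }

/-- The `n`-th Chevalley–Eilenberg cohomology space `Hⁿ(g, M)`: the quotient of the space of
`n`-cocycles by the space of `n`-coboundaries (viewed inside the cocycles). -/
abbrev ceH (n : ℕ) : Type _ :=
  ↥(ceZ k g M n) ⧸ (ceB k g M n).comap (ceZ k g M n).subtype

end ChevalleyEilenberg

/-- The Lie algebra `sl₃(k)` of traceless `3 × 3` matrices over `k`. -/
abbrev sl3 (k : Type*) [Field k] := ↥(LieAlgebra.SpecialLinear.sl (Fin 3) k)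

/-- The quotient `sl₃(k)/Z(sl₃(k))` of `sl₃(k)` by its center, as a module over `sl₃(k)`
via the action induced by the adjoint action. -/
abbrev sl3ModCenter (k : Type*) [Field k] := (sl3 k) ⧸ LieAlgebra.center k (sl3 k)


section Aux
variable {k : Type*} [Field k]

lemma three_eq_zero' [CharP k 3] : (3 : k) = 0 := by
  exact_mod_cast CharP.cast_eq_zero k 3

lemma sl3_trace (X : sl3 k) : X.1 0 0 + X.1 1 1 + X.1 2 2 = 0 := by
  have h := X.2
  have h2 : Matrix.trace X.1 = 0 := h
  rwa [Matrix.trace_fin_three] at h2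

/-- Constructor for elements of `sl3`. -/
def mk3 (A : Matrix (Fin 3) (Fin 3) k) (h : A 0 0 + A 1 1 + A 2 2 = 0) : sl3 k :=
  ⟨A, by
    have : Matrix.trace A = 0 := by rw [Matrix.trace_fin_three, h]
    exact this⟩

@[simp] lemma mk3_val (A : Matrix (Fin 3) (Fin 3) k) (h) : (mk3 A h).1 = A := rfl

/-- The condition of being scalar. -/
def IsSc (A : Matrix (Fin 3) (Fin 3) k) : Prop :=
  (A 0 1 = 0 ∧ A 0 2 = 0 ∧ A 1 0 = 0 ∧ A 1 2 = 0 ∧ A 2 0 = 0 ∧ A 2 1 = 0) ∧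
    A 0 0 = A 1 1 ∧ A 1 1 = A 2 2

lemma br_val (X Y : sl3 k) : (⁅X, Y⁆ : sl3 k).1 = X.1 * Y.1 - Y.1 * X.1 := rfl

lemma br_entry (X Y : sl3 k) (i j : Fin 3) : (⁅X, Y⁆ : sl3 k).1 i j =
    (X.1 i 0 * Y.1 0 j + X.1 i 1 * Y.1 1 j + X.1 i 2 * Y.1 2 j) -
    (Y.1 i 0 * X.1 0 j + Y.1 i 1 * X.1 1 j + Y.1 i 2 * X.1 2 j) := by
  rw [br_val]; simp [Matrix.mul_apply, Fin.sum_univ_three]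

lemma sl3_ext (X Y : sl3 k) (h : ∀ i j, X.1 i j = Y.1 i j) : X = Y :=
  Subtype.ext (Matrix.ext h)

variable (k) in
/-- matrix units -/
def E (i j : Fin 3) (h : i ≠ j) : sl3 k := mk3 (Matrix.of fun a b => if a = i ∧ b = j then 1 else 0) (by
  fin_cases i <;> fin_cases j <;> simp_all)

lemma E_val (i j : Fin 3) (h : i ≠ j) (a b : Fin 3) :
  (E k i j h).1 a b = if a = i ∧ b = j then 1 else 0 := rfl

lemma mem_center_iff (X : sl3 k) : X ∈ LieAlgebra.center k (sl3 k) ↔ IsSc X.1 := by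
  rw [LieModule.mem_maxTrivSubmodule]
  constructor
  · intro h
    have h1 := h (E k 0 1 (by decide))
    have h2 := h (E k 1 2 (by decide))
    have h3 := h (E k 2 0 (by decide))
    have g1 : ∀ i j, (⁅E k 0 1 (by decide), X⁆ : sl3 k).1 i j = 0 := by rw [h1]; intros; rfl
    have g2 : ∀ i j, (⁅E k 1 2 (by decide), X⁆ : sl3 k).1 i j = 0 := by rw [h2]; intros; rfl
    have g3 : ∀ i j, (⁅E k 2 0 (by decide), X⁆ : sl3 k).1 i j = 0 := by rw [h3]; intros; rfl
    simp only [br_entry, E_val] at g1 g2 g3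
    simp [Fin.forall_fin_succ] at g1 g2 g3
    unfold IsSc
    grind
  · rintro ⟨⟨h1, h2, h3, h4, h5, h6⟩, h7, h8⟩ Y
    apply sl3_ext
    intro i j
    rw [br_entry]
    change _ = (0 : k)
    fin_cases i <;> fin_cases j <;> simp [h1, h2, h3, h4, h5, h6, h7, h8] <;> ring

/-- Cocycle condition for 1-cochains. -/
lemma mem_ceZ_one {g M : Type*} [LieRing g] [LieAlgebra k g] [AddCommGroup M] [Module k M]
    [LieRingModule g M] [LieModule k g M] (ψ : g [⋀^Fin 1]→ₗ[k] M) :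
    ψ ∈ ceZ k g M 1 ↔ ∀ x y : g, ⁅x, ψ ![y]⁆ - ⁅y, ψ ![x]⁆ - ψ ![⁅x, y⁆] = 0 := by
  have key : ∀ x y : g, ceD k g M ψ ![x, y] = ⁅x, ψ ![y]⁆ - ⁅y, ψ ![x]⁆ - ψ ![⁅x, y⁆] := by
    intro x y
    have e1 : ∀ (z : Fin 1 → g), z = ![z 0] := by
      intro z; ext i; fin_cases i; rfl
    simp only [ceD]
    simp
    rw [e1 (Fin.cons _ _), e1 (fun l => _), e1 (fun l => Matrix.vecCons x ![y] (Fin.succAbove 1 l))]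
    simp
    abel
  constructor
  · intro h x y
    rw [← key]; exact h _
  · intro h v
    have : v = ![v 0, v 1] := by ext i; fin_cases i <;> rfl
    rw [this, key]; exact h _ _

lemma mem_ceB_one {g M : Type*} [LieRing g] [LieAlgebra k g] [AddCommGroup M] [Module k M]
    [LieRingModule g M] [LieModule k g M] (ψ : g [⋀^Fin 1]→ₗ[k] M) :
    ψ ∈ ceB k g M 1 ↔ ∃ m : M, ∀ x : g, ψ ![x] = ⁅x, m⁆ := by
  constructor
  · rintro ⟨φ, h⟩
    exact ⟨φ ![], fun x => by rw [h]; rfl⟩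
  · rintro ⟨m, h⟩
    refine ⟨AlternatingMap.constOfIsEmpty k g (Fin 0) m, fun v => ?_⟩
    have : v = ![v 0] := by ext i; fin_cases i; rfl
    rw [this, h]; rfl

/-- Off-diagonal entry as a functional on the quotient. -/
def ent (i j : Fin 3) (hij : i ≠ j) : sl3ModCenter k →ₗ[k] k :=
  (LieAlgebra.center k (sl3 k)).toSubmodule.liftQ
    { toFun := fun X => X.1 i j
      map_add' := fun _ _ => rfl
      map_smul' := fun _ _ => rfl } (by
    intro X hX
    have hX' := (mem_center_iff X).1 hX
    obtain ⟨⟨h1, h2, h3, h4, h5, h6⟩, -⟩ := hX'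
    change X.1 i j = 0
    fin_cases i <;> fin_cases j <;> simp_all)

lemma ent_mk (i j : Fin 3) (hij : i ≠ j) (X : sl3 k) :
  ent i j hij (LieSubmodule.Quotient.mk X : sl3ModCenter k) = X.1 i j := rfl

lemma br_01_02 : ⁅E k 0 1 (by decide), E k 0 2 (by decide)⁆ = 0 := by
  apply sl3_ext; intro i j; rw [br_entry]
  fin_cases i <;> fin_cases j <;> simp [E_val]

lemma br_01_12 : ⁅E k 0 1 (by decide), E k 1 2 (by decide)⁆ = E k 0 2 (by decide) := by
  apply sl3_ext; intro i j; rw [br_entry]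
  fin_cases i <;> fin_cases j <;> simp [E_val]

lemma br_01_20 : ⁅E k 0 1 (by decide), E k 2 0 (by decide)⁆ = -E k 2 1 (by decide) := by
  apply sl3_ext; intro i j; rw [br_entry]
  fin_cases i <;> fin_cases j <;> simp [E_val]

lemma br_01_21 : ⁅E k 0 1 (by decide), E k 2 1 (by decide)⁆ = 0 := by
  apply sl3_ext; intro i j; rw [br_entry]
  fin_cases i <;> fin_cases j <;> simp [E_val]

lemma br_02_10 : ⁅E k 0 2 (by decide), E k 1 0 (by decide)⁆ = -E k 1 2 (by decide) := by
  apply sl3_ext; intro i j; rw [br_entry]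
  fin_cases i <;> fin_cases j <;> simp [E_val]

lemma br_02_12 : ⁅E k 0 2 (by decide), E k 1 2 (by decide)⁆ = 0 := by
  apply sl3_ext; intro i j; rw [br_entry]
  fin_cases i <;> fin_cases j <;> simp [E_val]

lemma br_02_21 : ⁅E k 0 2 (by decide), E k 2 1 (by decide)⁆ = E k 0 1 (by decide) := by
  apply sl3_ext; intro i j; rw [br_entry]
  fin_cases i <;> fin_cases j <;> simp [E_val]

lemma br_10_12 : ⁅E k 1 0 (by decide), E k 1 2 (by decide)⁆ = 0 := by
  apply sl3_ext; intro i j; rw [br_entry]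
  fin_cases i <;> fin_cases j <;> simp [E_val]

lemma br_10_20 : ⁅E k 1 0 (by decide), E k 2 0 (by decide)⁆ = 0 := by
  apply sl3_ext; intro i j; rw [br_entry]
  fin_cases i <;> fin_cases j <;> simp [E_val]

lemma br_10_21 : ⁅E k 1 0 (by decide), E k 2 1 (by decide)⁆ = -E k 2 0 (by decide) := by
  apply sl3_ext; intro i j; rw [br_entry]
  fin_cases i <;> fin_cases j <;> simp [E_val]

lemma br_12_20 : ⁅E k 1 2 (by decide), E k 2 0 (by decide)⁆ = E k 1 0 (by decide) := by
  apply sl3_ext; intro i j; rw [br_entry]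
  fin_cases i <;> fin_cases j <;> simp [E_val]

lemma br_20_21 : ⁅E k 2 0 (by decide), E k 2 1 (by decide)⁆ = 0 := by
  apply sl3_ext; intro i j; rw [br_entry]
  fin_cases i <;> fin_cases j <;> simp [E_val]

lemma key_gen [CharP k 3] (F : sl3 k →ₗ[k] sl3 k)
    (hF : ∀ X Y, IsSc (⁅X, F Y⁆ - ⁅Y, F X⁆ - F ⁅X, Y⁆ : sl3 k).1)
    (p1 : (F (E k 1 0 (by decide))).1 0 2 = 0) (p2 : (F (E k 2 1 (by decide))).1 1 0 = 0)
    (p3 : (F (E k 0 2 (by decide))).1 2 1 = 0) (p4 : (F (E k 0 1 (by decide))).1 2 0 = 0)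
    (p5 : (F (E k 1 2 (by decide))).1 0 1 = 0) (p6 : (F (E k 2 0 (by decide))).1 1 2 = 0)
    (p7 : (F (E k 0 1 (by decide))).1 0 1 = (F (E k 1 2 (by decide))).1 1 2) :
    ∃ m : sl3 k, IsSc (F (E k 0 1 (by decide)) - ⁅E k 0 1 (by decide), m⁆ : sl3 k).1 ∧
      IsSc (F (E k 1 2 (by decide)) - ⁅E k 1 2 (by decide), m⁆ : sl3 k).1 ∧
      IsSc (F (E k 2 0 (by decide)) - ⁅E k 2 0 (by decide), m⁆ : sl3 k).1 := by
  have h3 : (3 : k) = 0 := three_eq_zero'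
  have t01 := sl3_trace (F (E k 0 1 (by decide)))
  have t02 := sl3_trace (F (E k 0 2 (by decide)))
  have t10 := sl3_trace (F (E k 1 0 (by decide)))
  have t12 := sl3_trace (F (E k 1 2 (by decide)))
  have t20 := sl3_trace (F (E k 2 0 (by decide)))
  have t21 := sl3_trace (F (E k 2 1 (by decide)))
  have h01_02 := hF (E k 0 1 (by decide)) (E k 0 2 (by decide))
  rw [br_01_02] at h01_02
  have h01_12 := hF (E k 0 1 (by decide)) (E k 1 2 (by decide))
  rw [br_01_12] at h01_12
  have h01_20 := hF (E k 0 1 (by decide)) (E k 2 0 (by decide))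
  rw [br_01_20] at h01_20
  have h01_21 := hF (E k 0 1 (by decide)) (E k 2 1 (by decide))
  rw [br_01_21] at h01_21
  have h02_10 := hF (E k 0 2 (by decide)) (E k 1 0 (by decide))
  rw [br_02_10] at h02_10
  have h02_12 := hF (E k 0 2 (by decide)) (E k 1 2 (by decide))
  rw [br_02_12] at h02_12
  have h02_21 := hF (E k 0 2 (by decide)) (E k 2 1 (by decide))
  rw [br_02_21] at h02_21
  have h10_12 := hF (E k 1 0 (by decide)) (E k 1 2 (by decide))
  rw [br_10_12] at h10_12
  have h10_20 := hF (E k 1 0 (by decide)) (E k 2 0 (by decide))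
  rw [br_10_20] at h10_20
  have h10_21 := hF (E k 1 0 (by decide)) (E k 2 1 (by decide))
  rw [br_10_21] at h10_21
  have h12_20 := hF (E k 1 2 (by decide)) (E k 2 0 (by decide))
  rw [br_12_20] at h12_20
  have h20_21 := hF (E k 2 0 (by decide)) (E k 2 1 (by decide))
  rw [br_20_21] at h20_21
  simp only [map_neg, map_zero] at h01_02 h01_12 h01_20 h01_21 h02_10 h02_12 h02_21 h10_12 h10_20 h10_21 h12_20 h20_21
  generalize F (E k 0 1 (by decide)) = A01 at *
  generalize F (E k 0 2 (by decide)) = A02 at *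
  generalize F (E k 1 0 (by decide)) = A10 at *
  generalize F (E k 1 2 (by decide)) = A12 at *
  generalize F (E k 2 0 (by decide)) = A20 at *
  generalize F (E k 2 1 (by decide)) = A21 at *
  clear hF
  have sv : ∀ X Y : sl3 k, ∀ i j, (X - Y).1 i j = X.1 i j - Y.1 i j := fun _ _ _ _ => rfl
  have nv : ∀ X : sl3 k, ∀ i j, (-X).1 i j = - X.1 i j := fun _ _ _ => rfl
  have zv : ∀ i j, (0 : sl3 k).1 i j = 0 := fun _ _ => rfl
  simp only [IsSc, sv, nv, zv, br_entry, E_val] at h01_02 h01_12 h01_20 h01_21 h02_10 h02_12 h02_21 h10_12 h10_20 h10_21 h12_20 h20_21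
  simp at h01_02 h01_12 h01_20 h01_21 h02_10 h02_12 h02_21 h10_12 h10_20 h10_21 h12_20 h20_21
  let m : sl3 k := mk3 !![-A01.1 0 1, -A12.1 0 2, A20.1 0 0 - A20.1 2 2;
    A01.1 1 1 - A01.1 0 0, 0, A01.1 0 2;
    -A01.1 2 1, A12.1 2 2 - A12.1 1 1, A01.1 0 1] (by simp)
  have m00 : m.1 0 0 = -A01.1 0 1 := rfl
  have m01 : m.1 0 1 = -A12.1 0 2 := rfl
  have m02 : m.1 0 2 = A20.1 0 0 - A20.1 2 2 := rfl
  have m10 : m.1 1 0 = A01.1 1 1 - A01.1 0 0 := rfl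
  have m11 : m.1 1 1 = 0 := rfl
  have m12 : m.1 1 2 = A01.1 0 2 := rfl
  have m20 : m.1 2 0 = -A01.1 2 1 := rfl
  have m21 : m.1 2 1 = A12.1 2 2 - A12.1 1 1 := rfl
  have m22 : m.1 2 2 = A01.1 0 1 := rfl
  refine ⟨m, ?_, ?_, ?_⟩
  all_goals
    simp only [IsSc, sv, br_entry, E_val, m00, m01, m02, m10, m11, m12, m20, m21, m22]
    clear_value m
    clear m00 m01 m02 m10 m11 m12 m20 m21 m22 m
    simp
    clear sv nv zv
    grind

lemma sl3_decomp (X : sl3 k) : X = X.1 0 1 • E k 0 1 (by decide) + X.1 0 2 • E k 0 2 (by decide)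
    + X.1 1 0 • E k 1 0 (by decide) + X.1 1 2 • E k 1 2 (by decide)
    + X.1 2 0 • E k 2 0 (by decide) + X.1 2 1 • E k 2 1 (by decide)
    + X.1 0 0 • ⁅E k 0 1 (by decide), E k 1 0 (by decide)⁆
    + (X.1 0 0 + X.1 1 1) • ⁅E k 1 2 (by decide), E k 2 1 (by decide)⁆ := by
  have av : ∀ X Y : sl3 k, ∀ i j, (X + Y).1 i j = X.1 i j + Y.1 i j := fun _ _ _ _ => rfl
  have mv : ∀ (c : k) (X : sl3 k), ∀ i j, (c • X).1 i j = c * X.1 i j := fun _ _ _ _ => rfl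
  have ht := sl3_trace X
  apply sl3_ext
  intro i j
  simp only [av, mv, br_entry, E_val]
  fin_cases i <;> fin_cases j <;> simp
  linear_combination ht

lemma cocycle_zero {M : Type*} [AddCommGroup M] [Module k M]
    [LieRingModule (sl3 k) M] [LieModule k (sl3 k) M] (f : sl3 k →ₗ[k] M)
    (hf : ∀ X Y, ⁅X, f Y⁆ - ⁅Y, f X⁆ - f ⁅X, Y⁆ = 0)
    (h1 : f (E k 0 1 (by decide)) = 0) (h2 : f (E k 1 2 (by decide)) = 0)
    (h3 : f (E k 2 0 (by decide)) = 0) (X : sl3 k) : f X = 0 := by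
  have step : ∀ X Y, f X = 0 → f Y = 0 → f ⁅X, Y⁆ = 0 := by
    intro X Y hX hY
    have := hf X Y
    rw [hX, hY, lie_zero, lie_zero, sub_zero, zero_sub, neg_eq_zero] at this
    exact this
  have h4 := step _ _ h1 h2
  have h5 := step _ _ h1 h3
  have h6 := step _ _ h2 h3
  rw [br_01_12] at h4
  rw [br_01_20, map_neg, neg_eq_zero] at h5
  rw [br_12_20] at h6
  have h7 := step _ _ h1 h6
  have h8 := step _ _ h2 h5
  rw [sl3_decomp X]
  simp only [map_add, map_smul, h1, h2, h3, h4, h5, h6, h7, h8, smul_zero, add_zero]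

/-- The family of outer derivations. -/
def outer (c : Fin 7 → k) : sl3 k →ₗ[k] sl3 k where
  toFun X := mk3 !![0, -(c 0 * X.1 2 0) + c 4 * X.1 1 2 + c 6 * X.1 0 1,
      c 0 * X.1 1 0 - c 5 * X.1 2 1 + c 6 * X.1 0 2;
    c 1 * X.1 2 1 - c 3 * X.1 0 2 - c 6 * X.1 1 0, 0, -(c 1 * X.1 0 1) + c 5 * X.1 2 0;
    -(c 2 * X.1 1 2) + c 3 * X.1 0 1 - c 6 * X.1 2 0, c 2 * X.1 0 2 - c 4 * X.1 1 0, 0] (by simp)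
  map_add' X Y := by
    have av : ∀ i j, (X + Y).1 i j = X.1 i j + Y.1 i j := fun _ _ => rfl
    have av' : ∀ X Y : sl3 k, ∀ i j, (X + Y).1 i j = X.1 i j + Y.1 i j := fun _ _ _ _ => rfl
    apply sl3_ext
    intro i j
    rw [av']
    simp only [mk3_val, av]
    fin_cases i <;> fin_cases j <;> simp <;> ring
  map_smul' a X := by
    have av : ∀ i j, (a • X).1 i j = a * X.1 i j := fun _ _ => rfl
    have av' : ∀ X : sl3 k, ∀ i j, (a • X).1 i j = a * X.1 i j := fun _ _ _ => rfl
    apply sl3_ext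
    intro i j
    rw [RingHom.id_apply, av']
    simp only [mk3_val, av]
    fin_cases i <;> fin_cases j <;> simp <;> ring

lemma outer_val (c : Fin 7 → k) (X : sl3 k) : (outer c X).1 =
    !![0, -(c 0 * X.1 2 0) + c 4 * X.1 1 2 + c 6 * X.1 0 1,
      c 0 * X.1 1 0 - c 5 * X.1 2 1 + c 6 * X.1 0 2;
    c 1 * X.1 2 1 - c 3 * X.1 0 2 - c 6 * X.1 1 0, 0, -(c 1 * X.1 0 1) + c 5 * X.1 2 0;
    -(c 2 * X.1 1 2) + c 3 * X.1 0 1 - c 6 * X.1 2 0, c 2 * X.1 0 2 - c 4 * X.1 1 0, 0] := rfl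

lemma outer_cocycle [CharP k 3] (c : Fin 7 → k) (X Y : sl3 k) :
    IsSc (⁅X, outer c Y⁆ - ⁅Y, outer c X⁆ - outer c ⁅X, Y⁆ : sl3 k).1 := by
  have sv : ∀ X Y : sl3 k, ∀ i j, (X - Y).1 i j = X.1 i j - Y.1 i j := fun _ _ _ _ => rfl
  have h3 : (3 : k) = 0 := three_eq_zero'
  have hX : X.1 2 2 = - X.1 0 0 - X.1 1 1 := by linear_combination sl3_trace X
  have hY : Y.1 2 2 = - Y.1 0 0 - Y.1 1 1 := by linear_combination sl3_trace Y
  simp only [IsSc, sv, br_entry, outer_val]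
  simp [hX, hY]
  refine ⟨⟨?_, ?_, ?_, ?_, ?_, ?_⟩, ?_, ?_⟩ <;> grind

variable (k) in
/-- The classifying functionals. -/
def Phi : ceZ k (sl3 k) (sl3ModCenter k) 1 →ₗ[k] (Fin 7 → k) where
  toFun ψ := ![ent 0 2 (by decide) (ψ.1 ![E k 1 0 (by decide)]),
    ent 1 0 (by decide) (ψ.1 ![E k 2 1 (by decide)]),
    ent 2 1 (by decide) (ψ.1 ![E k 0 2 (by decide)]),
    ent 2 0 (by decide) (ψ.1 ![E k 0 1 (by decide)]),
    ent 0 1 (by decide) (ψ.1 ![E k 1 2 (by decide)]),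
    ent 1 2 (by decide) (ψ.1 ![E k 2 0 (by decide)]),
    ent 0 1 (by decide) (ψ.1 ![E k 0 1 (by decide)]) -
      ent 1 2 (by decide) (ψ.1 ![E k 1 2 (by decide)])]
  map_add' ψ φ := by
    ext i
    fin_cases i <;> simp
    ring
  map_smul' a ψ := by
    ext i
    fin_cases i <;> simp
    ring

lemma quot_bracket (X Y : sl3 k) : ⁅X, (LieSubmodule.Quotient.mk Y : sl3ModCenter k)⁆ =
    (LieSubmodule.Quotient.mk ⁅X, Y⁆ : sl3ModCenter k) := rfl

lemma quot_zero (X : sl3 k) : (LieSubmodule.Quotient.mk X : sl3ModCenter k) = 0 ↔ IsSc X.1 := by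
  rw [← mem_center_iff]
  exact Submodule.Quotient.mk_eq_zero (LieAlgebra.center k (sl3 k)).toSubmodule

lemma quot_sub (X Y : sl3 k) : (LieSubmodule.Quotient.mk (X - Y) : sl3ModCenter k) =
    LieSubmodule.Quotient.mk X - LieSubmodule.Quotient.mk Y := rfl

lemma Phi_surj [CharP k 3] : Function.Surjective (Phi k) := by
  intro c
  let q : sl3 k →ₗ[k] sl3ModCenter k := (LieAlgebra.center k (sl3 k)).toSubmodule.mkQ
  let ψ : (sl3 k) [⋀^Fin 1]→ₗ[k] sl3ModCenter k :=
    AlternatingMap.ofSubsingleton k (sl3 k) (sl3ModCenter k) (0 : Fin 1) (q ∘ₗ outer c)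
  have hψ : ∀ X, ψ ![X] = LieSubmodule.Quotient.mk (outer c X) := fun X => rfl
  have hz : ψ ∈ ceZ k (sl3 k) (sl3ModCenter k) 1 := by
    rw [mem_ceZ_one]
    intro X Y
    rw [hψ, hψ, hψ, quot_bracket, quot_bracket, ← quot_sub, ← quot_sub, quot_zero]
    exact outer_cocycle c X Y
  refine ⟨⟨ψ, hz⟩, ?_⟩
  ext i
  simp only [Phi, LinearMap.coe_mk, AddHom.coe_mk, hψ, ent_mk, outer_val, E_val]
  fin_cases i <;> simp

lemma Phi_ker [CharP k 3] : LinearMap.ker (Phi k) =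
    (ceB k (sl3 k) (sl3ModCenter k) 1).comap (ceZ k (sl3 k) (sl3ModCenter k) 1).subtype := by
  ext ⟨ψ, hz⟩
  rw [LinearMap.mem_ker, Submodule.mem_comap, Submodule.subtype_apply, mem_ceB_one]
  constructor
  · intro h0
    have hz' := (mem_ceZ_one ψ).1 hz
    let q : sl3 k →ₗ[k] sl3ModCenter k := (LieAlgebra.center k (sl3 k)).toSubmodule.mkQ
    have hq : Function.Surjective q := Submodule.mkQ_surjective _
    obtain ⟨s, hs⟩ := q.exists_rightInverse_of_surjective (LinearMap.range_eq_top.2 hq)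
    let f : sl3 k →ₗ[k] sl3ModCenter k :=
      (AlternatingMap.ofSubsingleton k (sl3 k) (sl3ModCenter k) (0 : Fin 1)).symm ψ
    have hf : ∀ X, ψ ![X] = f X := by
      intro X
      change ψ _ = ψ _
      congr 1
      ext i; fin_cases i; rfl
    let F : sl3 k →ₗ[k] sl3 k := s ∘ₗ f
    have hF : ∀ X, f X = LieSubmodule.Quotient.mk (F X) := by
      intro X
      exact (LinearMap.congr_fun hs (f X)).symm
    have hc : ∀ X Y, ⁅X, f Y⁆ - ⁅Y, f X⁆ - f ⁅X, Y⁆ = 0 := by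
      intro X Y
      have := hz' X Y
      rwa [hf, hf, hf] at this
    have hFc : ∀ X Y, IsSc (⁅X, F Y⁆ - ⁅Y, F X⁆ - F ⁅X, Y⁆ : sl3 k).1 := by
      intro X Y
      rw [← quot_zero, quot_sub, quot_sub, ← quot_bracket, ← quot_bracket, ← hF, ← hF, ← hF]
      exact hc X Y
    have hp : ∀ i, Phi k ⟨ψ, hz⟩ i = 0 := fun i => by rw [h0]; rfl
    simp only [Phi, LinearMap.coe_mk, AddHom.coe_mk, hf, hF, ent_mk] at hp
    obtain ⟨m, h1, h2, h3⟩ := key_gen F hFc (hp 0) (hp 1) (hp 2) (hp 3) (hp 4) (hp 5)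
      (sub_eq_zero.1 (hp 6))
    refine ⟨LieSubmodule.Quotient.mk m, fun X => ?_⟩
    let ad : sl3 k →ₗ[k] sl3ModCenter k :=
      { toFun := fun X => ⁅X, (LieSubmodule.Quotient.mk m : sl3ModCenter k)⁆
        map_add' := fun X Y => add_lie _ _ _
        map_smul' := fun a X => smul_lie _ _ _ }
    have had : ∀ X, ad X = ⁅X, (LieSubmodule.Quotient.mk m : sl3ModCenter k)⁆ := fun _ => rfl
    have hfa : ∀ X, (f - ad) X = LieSubmodule.Quotient.mk (F X - ⁅X, m⁆) := by
      intro X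
      rw [quot_sub, ← hF, ← quot_bracket]; rfl
    have := cocycle_zero (f - ad) (by
      intro X Y
      simp only [LinearMap.sub_apply, had, lie_sub, lie_lie]
      rw [← hc X Y]
      abel) (by rw [hfa, quot_zero]; exact h1) (by rw [hfa, quot_zero]; exact h2)
        (by rw [hfa, quot_zero]; exact h3) X
    rw [hf]
    exact sub_eq_zero.1 this
  · rintro ⟨m, hm⟩
    obtain ⟨m, rfl⟩ := Submodule.mkQ_surjective _ m
    have hm' : ∀ X, ψ ![X] = LieSubmodule.Quotient.mk ⁅X, m⁆ := hm
    have h3 : (3 : k) = 0 := three_eq_zero'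
    have ht := sl3_trace m
    ext i
    simp only [Phi, LinearMap.coe_mk, AddHom.coe_mk, hm', ent_mk, br_entry, E_val]
    fin_cases i <;> simp
    grind

end Aux

theorem H1_quotient_module_dim (k : Type*) [Field k] [IsAlgClosed k] [CharP k 3] :
    Module.finrank k (ceH k (sl3 k) (sl3ModCenter k) 1) = 7 := by
  have e := (Submodule.quotEquivOfEq _ _ (Phi_ker (k := k)).symm).trans
    ((Phi k).quotKerEquivOfSurjective Phi_surj)
  rw [e.finrank_eq]
  simp
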